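/- There exists a 2-(24,4,1) packing with 42 blocks whose leave is a vertex-disjoint union of one cycle of length 3 and three cycles of length 7, covering all 24 points (leave type 3^1 7^3). -/

import Mathlib

/-- A 2-(24,4,1) packing: a collection of 4-element blocks on 24 points such that
every pair of distinct points lies in at most one block. -/
def IsPacking (B : Finset (Finset (Fin 24))) : Prop :=
  (∀ b ∈ B, b.card = 4) ∧
  ∀ p q : Fin 24, p ≠ q → ∀ b₁ ∈ B, ∀ b₂ ∈ B,
    p ∈ b₁ → q ∈ b₁ → p ∈ b₂ → q ∈ b₂ → b₁ = b₂

/-- Adjacency in the leave of a packing: the pair of distinct points is covered by no block. -/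
def LeaveAdj (B : Finset (Finset (Fin 24))) (p q : Fin 24) : Prop :=
  p ≠ q ∧ ∀ b ∈ B, ¬ (p ∈ b ∧ q ∈ b)

/-- The leave of the packing `B` is a vertex-disjoint union of cycles whose lengths are
given by the list `L`, covering all 24 points. -/
def LeaveIsCycleType (B : Finset (Finset (Fin 24))) (L : List ℕ) : Prop :=
  ∃ f : (i : Fin L.length) → ZMod (L.get i) → Fin 24,
    Function.Bijective (fun x : Σ i : Fin L.length, ZMod (L.get i) => f x.1 x.2) ∧
    ∀ p q : Fin 24, LeaveAdj B p q ↔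
      ∃ i k, (p = f i k ∧ q = f i (k + 1)) ∨ (q = f i k ∧ p = f i (k + 1))

/-!
The packing is built from differences in `ℤ/21`. The points are the residues modulo 21 together
with three points `∞₀, ∞₁, ∞₂`, and `g ∈ ℤ/21` acts by adding `g` to a residue and to the index `k`
of `∞ₖ`, which is taken modulo 3. The blocks are the translates of `{0, 2, 6, 11}` and
`{0, 1, 8, ∞₀}`.

The differences inside `{0, 2, 6, 11}` are `±2, ±4, ±5, ±6, ±9, ±10` and those inside `{0, 1, 8}`
are `±1, ±7, ±8`; since `0, 1, 8` are distinct modulo 3, the translates of the second block join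
each `∞ₖ` to every residue exactly once. So no pair is covered twice, and the uncovered pairs are
those with difference `±3`, which form three 7-cycles, and the pairs of points `∞ₖ`, which form a
3-cycle.
-/

open scoped Pointwise

section Development

variable {G X ι : Type*} [AddGroup G] [AddAction G X] [DecidableEq X]

variable (G) in
/-- A family of base blocks in a set acted on by `G` such that each pair of distinct points
`p, q` has at most one choice of `g` and `i` for which `g +ᵥ p` and `g +ᵥ q` both lie in `D i`. For
`G` acting on itself by translation, this says that each nonzero element of `G` occurs at most once
as a difference of two elements of the same base block. -/
def IsDifferencePacking (D : ι → Finset X) : Prop :=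
  ∀ i j, ∀ g : G, ∀ p ∈ D i, ∀ q ∈ D i, p ≠ q → g +ᵥ p ∈ D j → g +ᵥ q ∈ D j → g = 0 ∧ i = j

lemma IsDifferencePacking.eq_of_mem_vadd {D : ι → Finset X} (hD : IsDifferencePacking G D)
    {p q : X} (hpq : p ≠ q) {g h : G} {i j : ι} (hpi : p ∈ g +ᵥ D i) (hqi : q ∈ g +ᵥ D i)
    (hpj : p ∈ h +ᵥ D j) (hqj : q ∈ h +ᵥ D j) : g = h ∧ i = j := by
  rw [← Finset.neg_vadd_mem_iff] at hpi hqi hpj hqj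
  obtain ⟨hgh, hij⟩ := hD i j (-h + g) _ hpi _ hqi (by simpa using hpq)
    (by simpa [add_vadd] using hpj) (by simpa [add_vadd] using hqj)
  exact ⟨(neg_add_eq_zero.mp hgh).symm, hij⟩

lemma IsDifferencePacking.vadd_injective {D : ι → Finset X} (hD : IsDifferencePacking G D)
    (hcard : ∀ i, 1 < (D i).card) :
    Function.Injective fun x : G × ι => x.1 +ᵥ D x.2 := by
  rintro ⟨g, i⟩ ⟨h, j⟩ (hblock : g +ᵥ D i = h +ᵥ D j)
  obtain ⟨p, hp, q, hq, hpq⟩ :=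
    Finset.one_lt_card.mp ((hcard i).trans_eq (Finset.card_vadd_finset g (D i)).symm)
  exact Prod.ext_iff.mpr (hD.eq_of_mem_vadd hpq hp hq (hblock ▸ hp) (hblock ▸ hq))

variable [Fintype G] [Fintype ι]

variable (G) in
/-- The development of the base blocks `D` under `G`: the set of all their translates. -/
def development (D : ι → Finset X) : Finset (Finset X) :=
  Finset.univ.image fun x : G × ι => x.1 +ᵥ D x.2

lemma mem_development {D : ι → Finset X} {b : Finset X} :
    b ∈ development G D ↔ ∃ g : G, ∃ i, g +ᵥ D i = b := by
  simp [development]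

lemma IsDifferencePacking.card_development {D : ι → Finset X} (hD : IsDifferencePacking G D)
    (hcard : ∀ i, 1 < (D i).card) :
    (development G D).card = Fintype.card G * Fintype.card ι := by
  rw [development, Finset.card_image_of_injective _ (hD.vadd_injective hcard), Finset.card_univ,
    Fintype.card_prod]

end Development

section Packing

variable {G ι : Type*} [AddGroup G] [AddAction G (Fin 24)] [Fintype G] [Fintype ι]
  {D : ι → Finset (Fin 24)}

lemma IsDifferencePacking.isPacking_development (hD : IsDifferencePacking G D)
    (hcard : ∀ i, (D i).card = 4) : IsPacking (development G D) := by
  simp only [IsPacking, mem_development]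
  constructor
  · rintro _ ⟨g, i, rfl⟩
    rw [Finset.card_vadd_finset, hcard]
  · rintro p q hpq _ ⟨g, i, rfl⟩ _ ⟨h, j, rfl⟩ hpi hqi hpj hqj
    obtain ⟨rfl, rfl⟩ := hD.eq_of_mem_vadd hpq hpi hqi hpj hqj
    rfl

lemma leaveAdj_development_iff {p q : Fin 24} :
    LeaveAdj (development G D) p q ↔
      p ≠ q ∧ ∀ g : G, ∀ i, ¬(g +ᵥ p ∈ D i ∧ g +ᵥ q ∈ D i) := by
  have hcovered : (∃ b ∈ development G D, p ∈ b ∧ q ∈ b) ↔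
      ∃ g : G, ∃ i, g +ᵥ p ∈ D i ∧ g +ᵥ q ∈ D i := by
    rw [← (Equiv.neg G).exists_congr_right]
    simp [mem_development, ← Finset.neg_vadd_mem_iff]
  simpa [LeaveAdj] using and_congr_right' (a := p ≠ q) (not_congr hcovered)

lemma leaveAdj_development_vadd_iff (g : G) {p q : Fin 24} :
    LeaveAdj (development G D) (g +ᵥ p) (g +ᵥ q) ↔ LeaveAdj (development G D) p q := by
  simp only [leaveAdj_development_iff, ne_eq, vadd_left_cancel_iff, ← add_vadd]
  rw [(Equiv.addRight g).forall_congr_left]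
  simp

end Packing

lemma iterate_zmod_val_add_one {α : Type*} {f : α → α} {n : ℕ} [NeZero n] {x : α}
    (hx : Function.IsPeriodicPt f n x) (k : ZMod n) : f^[(k + 1).val] x = f (f^[k.val] x) := by
  rw [ZMod.val_add, hx.iterate_mod_apply, ZMod.val_one_eq_one_mod, add_comm,
    Function.iterate_add_apply, (hx.apply_iterate k.val).iterate_mod_apply, Function.iterate_one]

lemma leaveIsCycleType_of_iterate {B : Finset (Finset (Fin 24))} {L : List ℕ}
    {succ : Fin 24 → Fin 24} (start : Fin L.length → Fin 24)
    (hpos : 0 ∉ L) (hsum : L.sum = 24)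
    (hperiod : ∀ i, Function.IsPeriodicPt succ (L.get i) (start i))
    (hreach : ∀ p, ∃ i, ∃ n < L.get i, succ^[n] (start i) = p)
    (hadj : ∀ p q, LeaveAdj B p q ↔ q = succ p ∨ p = succ q) : LeaveIsCycleType B L := by
  have : ∀ i, NeZero (L.get i) := fun i => ⟨fun h => hpos (h ▸ L.get_mem i)⟩
  let f (i : Fin L.length) (k : ZMod (L.get i)) : Fin 24 := succ^[k.val] (start i)
  have hf_surj (p : Fin 24) : ∃ i k, f i k = p := by
    obtain ⟨i, n, hn, rfl⟩ := hreach p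
    exact ⟨i, n, by simp only [f, ZMod.val_natCast_of_lt hn]⟩
  have hf_succ (i k) : f i (k + 1) = succ (f i k) := iterate_zmod_val_add_one (hperiod i) k
  refine ⟨f, (Fintype.bijective_iff_surjective_and_card _).mpr ⟨fun p => ?_, ?_⟩, fun p q => ?_⟩
  · obtain ⟨i, k, rfl⟩ := hf_surj p
    exact ⟨⟨i, k⟩, rfl⟩
  · simp [ZMod.card, hsum, Fin.sum_univ_getElem]
  · simp only [hadj, hf_succ]
    constructor
    · rintro (rfl | rfl)
      · obtain ⟨i, k, rfl⟩ := hf_surj p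
        exact ⟨i, k, .inl ⟨rfl, rfl⟩⟩
      · obtain ⟨i, k, rfl⟩ := hf_surj q
        exact ⟨i, k, .inr ⟨rfl, rfl⟩⟩
    · rintro ⟨i, k, ⟨rfl, rfl⟩ | ⟨rfl, rfl⟩⟩
      · exact .inl rfl
      · exact .inr rfl

/-- The action of `ℤ/21` on residues modulo 21 and, through reduction modulo 3, on the indices of
the points `∞ₖ`, with the residues numbered `0, …, 20` and `∞₀, ∞₁, ∞₂` numbered `21, 22, 23`. -/
instance translationAction : AddAction (ZMod 21) (Fin 24) :=
  letI : AddAction (ZMod 21) (ZMod 3) :=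
    AddAction.compHom _ (ZMod.castHom (by norm_num : 3 ∣ 21) (ZMod 3)).toAddMonoidHom
  let e : ZMod 21 ⊕ ZMod 3 ≃ Fin 24 := finSumFinEquiv
  e.symm.addAction (ZMod 21)

/-- The base blocks `{0, 2, 6, 11}` and `{0, 1, 8, ∞₀}`. -/
def baseBlock : Fin 2 → Finset (Fin 24) := ![{0, 2, 6, 11}, {0, 1, 8, 21}]

lemma card_baseBlock : ∀ i, (baseBlock i).card = 4 := by decide

lemma baseBlock_isDifferencePacking : IsDifferencePacking (ZMod 21) baseBlock := by
  unfold IsDifferencePacking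
  decide +kernel

lemma exists_vadd_representative_eq (p : Fin 24) :
    ∃ g : ZMod 21, ∃ r ∈ ({0, 21} : Finset (Fin 24)), g +ᵥ r = p := by
  decide +revert +kernel

/-- The successor of a point on its cycle of the leave: `x ↦ x + 3` and `∞ₖ ↦ ∞ₖ₊₁`. -/
def leaveSucc (p : Fin 24) : Fin 24 := (if p < 21 then 3 else 1 : ZMod 21) +ᵥ p

lemma leaveSucc_vadd (g : ZMod 21) (p : Fin 24) : leaveSucc (g +ᵥ p) = g +ᵥ leaveSucc p := by
  have hfin : g +ᵥ p < 21 ↔ p < 21 := by decide +revert +kernel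
  simp only [leaveSucc, hfin]
  exact vadd_comm _ g p

lemma leaveAdj_development_baseBlock_iff (p q : Fin 24) :
    LeaveAdj (development (ZMod 21) baseBlock) p q ↔ q = leaveSucc p ∨ p = leaveSucc q := by
  have hrepresentative : ∀ r ∈ ({0, 21} : Finset (Fin 24)), ∀ q,
      LeaveAdj (development (ZMod 21) baseBlock) r q ↔ q = leaveSucc r ∨ r = leaveSucc q := by
    simp only [leaveAdj_development_iff]
    decide +kernel
  obtain ⟨g, r, hr, rfl⟩ := exists_vadd_representative_eq p
  obtain ⟨q, rfl⟩ := AddAction.surjective g q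
  simp only [leaveAdj_development_vadd_iff, leaveSucc_vadd, vadd_left_cancel_iff,
    hrepresentative r hr]

lemma leaveIsCycleType_development_baseBlock :
    LeaveIsCycleType (development (ZMod 21) baseBlock) [3, 7, 7, 7] := by
  refine leaveIsCycleType_of_iterate (succ := leaveSucc) ![21, 0, 1, 2] (by decide) rfl ?_ ?_
    leaveAdj_development_baseBlock_iff
  · unfold Function.IsPeriodicPt Function.IsFixedPt
    decide +kernel
  · decide +kernel

/-- There is a 2-(24,4,1) packing with 42 blocks whose leave is a vertex-disjoint
union of cycles of lengths [3, 7, 7, 7], covering all 24 points. -/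
theorem exists_max_packing_with_leave_type :
    ∃ B : Finset (Finset (Fin 24)), IsPacking B ∧ B.card = 42 ∧
      LeaveIsCycleType B [3, 7, 7, 7] :=
  ⟨development (ZMod 21) baseBlock,
    baseBlock_isDifferencePacking.isPacking_development card_baseBlock,
    baseBlock_isDifferencePacking.card_development fun i => by simp [card_baseBlock],
    leaveIsCycleType_development_baseBlock⟩
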